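/- arXiv:1303.4448 — 5 statements merged into one kernel-verified Lean document; each statement's English description precedes it below -/
import Mathlib

section
/- For all N-bit binary numbers x and y, the (N−1)-truncated addition coincides with ordinary addition modulo 2^N: x +_{N−1} y ≡ x + y (mod 2^N). -/
/-!
A truncated carry at position `i ≤ m` looks at every lower position, so it does not depend on the
truncation. This full carry obeys the ripple-carry recursion
`c_{i+1} = ⌊(x_i + y_i + c_i) / 2⌋` (`tcarry_self_succ`), with `c_0 = 0`. By induction on `n`, the
sum digits below position `n` together with the carry `c_n 2^n` add up to
`x mod 2^n + y mod 2^n` (`sum_add_carry`). Taking `n = N` and reducing modulo `2^N` removes the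
last carry and gives the theorem, since only the carries at positions `i ≤ N - 1` enter the sum.
-/

/-- The `i`-th binary digit of `x`. -/
def bitd (x i : ℕ) : ℕ := (x / 2 ^ i) % 2

open Classical in
/-- The `m`-truncated carry bit at position `i`: it is 1 iff there is
`i - m ≤ j < i` with `(x_j, y_j) = (1,1)` and `x_k + y_k = 1` for all `j < k < i`. -/
noncomputable def tcarry (m x y i : ℕ) : ℕ :=
  if ∃ j, i - m ≤ j ∧ j < i ∧ bitd x j = 1 ∧ bitd y j = 1 ∧
      (∀ k, j < k → k < i → bitd x k + bitd y k = 1) then 1 else 0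

/-- The `m`-truncated addition of `N`-bit numbers: the bitwise xor of `x`, `y`
and the truncated carry array. -/
noncomputable def tadd (N m x y : ℕ) : ℕ :=
  ∑ i ∈ Finset.range N, ((bitd x i + bitd y i + tcarry m x y i) % 2) * 2 ^ i

lemma bitd_lt_two (x i : ℕ) : bitd x i < 2 := Nat.mod_lt _ two_pos

/-- For `i ≤ m` the window `i - m ≤ j` is vacuous, so all such truncations give the same carry;
`tcarry i x y i` serves as the canonical representative. -/
lemma tcarry_eq_self {m i : ℕ} (x y : ℕ) (h : i ≤ m) : tcarry m x y i = tcarry i x y i := by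
  unfold tcarry
  rw [Nat.sub_eq_zero_of_le h, Nat.sub_self]

lemma tcarry_self_zero (x y : ℕ) : tcarry 0 x y 0 = 0 := by
  simp [tcarry]

/-- The ripple-carry recursion: a carry into position `i + 1` is either generated at position `i`,
or generated further down and propagated through position `i`. -/
lemma tcarry_self_succ (x y i : ℕ) :
    tcarry (i + 1) x y (i + 1) = (bitd x i + bitd y i + tcarry i x y i) / 2 := by
  have hx := bitd_lt_two x i
  have hy := bitd_lt_two y i
  have key : (∃ j, i + 1 - (i + 1) ≤ j ∧ j < i + 1 ∧ bitd x j = 1 ∧ bitd y j = 1 ∧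
        (∀ k, j < k → k < i + 1 → bitd x k + bitd y k = 1)) ↔
      (bitd x i = 1 ∧ bitd y i = 1) ∨ (bitd x i + bitd y i = 1 ∧
        ∃ j, i - i ≤ j ∧ j < i ∧ bitd x j = 1 ∧ bitd y j = 1 ∧
          (∀ k, j < k → k < i → bitd x k + bitd y k = 1)) := by
    constructor
    · rintro ⟨j, -, hj, h1, h2, h3⟩
      rcases Nat.lt_succ_iff_lt_or_eq.mp hj with hlt | rfl
      · exact Or.inr ⟨h3 i hlt (by omega), j, by omega, hlt, h1, h2,
          fun k hk hki => h3 k hk (by omega)⟩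
      · exact Or.inl ⟨h1, h2⟩
    · rintro (⟨h1, h2⟩ | ⟨h, j, -, hj, h1, h2, h3⟩)
      · exact ⟨i, by omega, by omega, h1, h2, fun k hk hki => by omega⟩
      · refine ⟨j, by omega, by omega, h1, h2, fun k hk hki => ?_⟩
        rcases Nat.lt_succ_iff_lt_or_eq.mp hki with hlt | rfl
        · exact h3 k hk hlt
        · exact h
  unfold tcarry
  split_ifs with h1 h2 h2 <;> rw [key] at h1 <;> simp only [h2, and_true, and_false, or_false] at h1
    <;> omega

/-- Adding the lowest `n` digits of `x` and `y`: sum digits plus outgoing carry. -/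
lemma sum_add_carry (x y n : ℕ) :
    (∑ i ∈ Finset.range n, ((bitd x i + bitd y i + tcarry i x y i) % 2) * 2 ^ i)
      + tcarry n x y n * 2 ^ n = x % 2 ^ n + y % 2 ^ n := by
  induction n with
  | zero => simp [tcarry_self_zero, Nat.mod_one]
  | succ n ih =>
    rw [Finset.sum_range_succ, tcarry_self_succ, Nat.mod_pow_succ (x := x),
      Nat.mod_pow_succ (x := y)]
    change _ = x % 2 ^ n + 2 ^ n * bitd x n + (y % 2 ^ n + 2 ^ n * bitd y n)
    have hdiv := Nat.mod_add_div (bitd x n + bitd y n + tcarry n x y n) 2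
    linear_combination ih + 2 ^ n * hdiv

lemma sum_digits_lt (d : ℕ → ℕ) (n : ℕ) :
    ∑ i ∈ Finset.range n, (d i % 2) * 2 ^ i < 2 ^ n := by
  induction n with
  | zero => simp
  | succ n ih =>
    rw [Finset.sum_range_succ, pow_succ]
    have h : d n % 2 * 2 ^ n ≤ 1 * 2 ^ n := Nat.mul_le_mul_right _ (by omega)
    omega

/-- `(N-1)`-truncated addition coincides with ordinary addition mod `2^N`. -/
theorem tadd_pred_eq_add (N x y : ℕ) (hN : 1 ≤ N) (hx : x < 2 ^ N) (hy : y < 2 ^ N) :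
    tadd N (N - 1) x y = (x + y) % 2 ^ N := by
  have hsum : tadd N (N - 1) x y =
      ∑ i ∈ Finset.range N, ((bitd x i + bitd y i + tcarry i x y i) % 2) * 2 ^ i := by
    refine Finset.sum_congr rfl fun i hi => ?_
    rw [tcarry_eq_self x y (Nat.le_sub_one_of_lt (Finset.mem_range.mp hi))]
  have hlt := sum_digits_lt (fun i => bitd x i + bitd y i + tcarry i x y i) N
  have h := sum_add_carry x y N
  rw [Nat.mod_eq_of_lt hx, Nat.mod_eq_of_lt hy] at h
  rw [hsum, ← h, Nat.add_mul_mod_self_right, Nat.mod_eq_of_lt hlt]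
end

section
/- For all N-bit binary numbers x and y, every m ≥ 0, and every position i, the m-truncated carry bit is dominated by the true carry bit: if c_i^{(m)}(x,y) = 1 then c_i(x,y) = 1. -/
/-- The carry array of ordinary addition: `carry x y 0 = 0` and
`carry x y (i+1) = 1` iff `x_i + y_i + carry x y i ∈ {2,3}`. -/
def carry (x y : ℕ) : ℕ → ℕ
  | 0 => 0
  | i + 1 => if 2 ≤ bitd x i + bitd y i + carry x y i then 1 else 0

/-- A carry generated at position `j` (both digits `1`) propagates through any run of positions
whose digit sum is `1`, by induction on the end of the run. -/
lemma carry_eq_one_of_generate (x y j i : ℕ) (hji : j < i) (hxj : bitd x j = 1)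
    (hyj : bitd y j = 1) (h : ∀ k, j < k → k < i → bitd x k + bitd y k = 1) :
    carry x y i = 1 := by
  induction i, hji using Nat.le_induction with
  | base => simp [carry, hxj, hyj]
  | succ i hi ih =>
    have hc := ih fun k hk hki => h k hk (by omega)
    have hs := h i hi (by omega)
    simp [carry, hc, hs]

/-- the `m`-truncated carry bit is dominated by the true carry bit. -/
theorem tcarry_le_carry (N m x y i : ℕ) (hx : x < 2 ^ N) (hy : y < 2 ^ N) :
    tcarry m x y i = 1 → carry x y i = 1 := by
  intro h
  unfold tcarry at h
  split_ifs at h with hj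
  obtain ⟨j, -, hji, hxj, hyj, hk⟩ := hj
  exact carry_eq_one_of_generate x y j i hji hxj hyj hk
end

section
/- Fix m ≥ 1 and j ≥ m + 1, and for each length ℓ let A_m(ℓ) denote the number of pairs of binary strings (x, y) of length ℓ whose digit-sum sequence avoids the pattern P(m) (a 2 directly followed, in increasing index order, by m consecutive 1's). Then for each i with 0 ≤ i ≤ j − 1 − m, the number of pairs (x, y) of binary strings of length j such that: the rightmost i positions (positions 0 through i−1) have digit sums avoiding P(m), position i has digit sum 2 (i.e. x_i = y_i = 1), and positions i+1 through i+m each have digit sum 1, equals 2^m · 4^{j−1−m−i} · A_m(i). -/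
/-- The digit-sum sequence of the pair of length-`ℓ` binary strings `(x,y)` avoids the
pattern `P(m)`: there is no index `j` (with the whole pattern inside positions
`0, …, ℓ - 1`) where the digit sum is `2` directly followed by `m` consecutive
digit sums equal to `1`. -/
def avoids (m ℓ x y : ℕ) : Prop :=
  ∀ j, j + m + 1 ≤ ℓ →
    ¬(bitd x j + bitd y j = 2 ∧ ∀ k, j < k → k ≤ j + m → bitd x k + bitd y k = 1)

open Classical in
/-- `A m ℓ` counts the pairs of length-`ℓ` binary strings whose digit-sum
sequence avoids the pattern `P(m)`. -/
noncomputable def A (m ℓ : ℕ) : ℕ :=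
  ((Finset.range (2 ^ ℓ) ×ˢ Finset.range (2 ^ ℓ)).filter fun p => avoids m ℓ p.1 p.2).card

open Classical in
/-- The number of pairs of binary strings of length `n` (encoded as numbers below `2 ^ n`)
satisfying `P`. -/
noncomputable def pairCount (n : ℕ) (P : ℕ → ℕ → Prop) : ℕ :=
  ((Finset.range (2 ^ n) ×ˢ Finset.range (2 ^ n)).filter fun p => P p.1 p.2).card

/-- `P x y` depends only on the digits of `x` and `y` at positions below `n`. -/
def DependsBelow (n : ℕ) (P : ℕ → ℕ → Prop) : Prop :=
  ∀ x y, P (x % 2 ^ n) (y % 2 ^ n) ↔ P x y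

lemma bitd_mod {k n : ℕ} (h : k < n) (x : ℕ) : bitd (x % 2 ^ n) k = bitd x k := by
  unfold bitd
  obtain ⟨d, rfl⟩ : ∃ d, n = k + (d + 1) := ⟨n - k - 1, by omega⟩
  rw [pow_add, Nat.mod_mul_right_div_self, pow_succ, Nat.mod_mul_left_mod]

lemma bitd_of_lt {n x : ℕ} (h : x < 2 ^ (n + 1)) : bitd x n = x / 2 ^ n := by
  unfold bitd
  apply Nat.mod_eq_of_lt
  rw [Nat.div_lt_iff_lt_mul (by positivity)]
  rw [pow_succ] at h
  omega

lemma pairCount_congr {n : ℕ} {P Q : ℕ → ℕ → Prop} (h : ∀ x y, P x y ↔ Q x y) :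
    pairCount n P = pairCount n Q := by
  have : P = Q := by
    funext x y
    exact propext (h x y)
  rw [this]

/-- Independence of the top digits: the pairs of length `n + 1` correspond to a pair of length `n`
together with the two digits at position `n`, the latter being a pair of length `1`. -/
lemma pairCount_succ {n : ℕ} {P : ℕ → ℕ → Prop} (R : ℕ → ℕ → Prop) (hP : DependsBelow n P) :
    pairCount (n + 1) (fun x y => P x y ∧ R (bitd x n) (bitd y n))
      = pairCount n P * pairCount 1 R := by
  classical
  unfold pairCount
  rw [← Finset.card_product]
  have hpos : 0 < 2 ^ n := by positivity
  refine Finset.card_nbij'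
    (fun p => ((p.1 % 2 ^ n, p.2 % 2 ^ n), (p.1 / 2 ^ n, p.2 / 2 ^ n)))
    (fun q => (q.1.1 + 2 ^ n * q.2.1, q.1.2 + 2 ^ n * q.2.2)) ?_ ?_ ?_ ?_
  · rintro ⟨x, y⟩ h
    simp only [Finset.coe_filter, Finset.mem_product, Finset.mem_range, Set.mem_ofPred_eq] at h
    obtain ⟨⟨hx, hy⟩, hp, hr⟩ := h
    rw [bitd_of_lt hx, bitd_of_lt hy] at hr
    have hx' : x / 2 ^ n < 2 := by
      rw [Nat.div_lt_iff_lt_mul hpos]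
      rw [pow_succ] at hx
      omega
    have hy' : y / 2 ^ n < 2 := by
      rw [Nat.div_lt_iff_lt_mul hpos]
      rw [pow_succ] at hy
      omega
    simp [Nat.mod_lt _ hpos, Nat.le_of_lt_succ hx', Nat.le_of_lt_succ hy', hr, (hP x y).2 hp]
  · rintro ⟨⟨x, y⟩, ⟨a, b⟩⟩ h
    simp only [Finset.coe_product, Finset.coe_filter, Finset.mem_product, Finset.mem_range,
      Set.mem_prod, Set.mem_ofPred_eq, pow_one] at h
    obtain ⟨⟨⟨hx, hy⟩, hp⟩, ⟨ha, hb⟩, hr⟩ := h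
    have hx' : x + 2 ^ n * a < 2 ^ (n + 1) := by
      rw [pow_succ]
      nlinarith
    have hy' : y + 2 ^ n * b < 2 ^ (n + 1) := by
      rw [pow_succ]
      nlinarith
    simp only [Finset.coe_filter, Finset.mem_product, Finset.mem_range, Set.mem_ofPred_eq]
    refine ⟨⟨hx', hy'⟩, ?_, ?_⟩
    · rw [← hP]
      simpa [Nat.mod_eq_of_lt hx, Nat.mod_eq_of_lt hy] using hp
    · rw [bitd_of_lt hx', bitd_of_lt hy']
      simpa [Nat.add_mul_div_left _ _ hpos, Nat.div_eq_of_lt hx, Nat.div_eq_of_lt hy] using hr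
  · rintro ⟨x, y⟩ -
    simp [Nat.mod_add_div]
  · rintro ⟨⟨x, y⟩, ⟨a, b⟩⟩ h
    simp only [Finset.coe_product, Finset.coe_filter, Finset.mem_product, Finset.mem_range,
      Set.mem_prod, Set.mem_ofPred_eq] at h
    obtain ⟨⟨⟨hx, hy⟩, -⟩, -⟩ := h
    simp [Nat.add_mul_div_left _ _ hpos, Nat.div_eq_of_lt hx, Nat.div_eq_of_lt hy,
      Nat.mod_eq_of_lt hx, Nat.mod_eq_of_lt hy]

lemma pairCount_one_both : pairCount 1 (fun a b => a = 1 ∧ b = 1) = 1 := by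
  unfold pairCount
  rw [Finset.filter_congr_decidable]
  decide

lemma pairCount_one_sum : pairCount 1 (fun a b => a + b = 1) = 2 := by
  unfold pairCount
  rw [Finset.filter_congr_decidable]
  decide

lemma pairCount_one_true : pairCount 1 (fun _ _ => True) = 4 := by
  simp [pairCount]

lemma dependsBelow_avoids (m i : ℕ) : DependsBelow i (avoids m i) := by
  intro x y
  unfold avoids
  refine forall₂_congr fun j hj => not_congr (and_congr ?_ ?_)
  · rw [bitd_mod (by omega), bitd_mod (by omega)]
  · refine forall₃_congr fun k _ hk => ?_
    rw [bitd_mod (by omega), bitd_mod (by omega)]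

/-- The condition of the theorem, with `t` digit sums equal to `1` after the digit sum `2` at
position `i`. The length `t` of this block is independent of the pattern length `m`, so that the
block can be grown one position at a time. -/
def Occ (m i t x y : ℕ) : Prop :=
  avoids m i x y ∧ bitd x i = 1 ∧ bitd y i = 1 ∧
    ∀ k, i < k → k ≤ i + t → bitd x k + bitd y k = 1

lemma dependsBelow_occ (m i t : ℕ) : DependsBelow (i + t + 1) (Occ m i t) := by
  intro x y
  unfold Occ
  refine and_congr ?_ (and_congr ?_ (and_congr ?_ ?_))
  · rw [← dependsBelow_avoids m i x y, ← dependsBelow_avoids m i (x % _) (y % _),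
      Nat.mod_mod_of_dvd _ (pow_dvd_pow 2 (by omega)),
      Nat.mod_mod_of_dvd _ (pow_dvd_pow 2 (by omega))]
  · rw [bitd_mod (by omega)]
  · rw [bitd_mod (by omega)]
  · refine forall₃_congr fun k _ hk => ?_
    rw [bitd_mod (by omega), bitd_mod (by omega)]

lemma DependsBelow.mono {n n' : ℕ} {P : ℕ → ℕ → Prop} (hP : DependsBelow n P) (h : n ≤ n') :
    DependsBelow n' P := by
  intro x y
  rw [← hP x y, ← hP (x % _) (y % _), Nat.mod_mod_of_dvd _ (pow_dvd_pow 2 h),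
    Nat.mod_mod_of_dvd _ (pow_dvd_pow 2 h)]

/-- Strings that end with the block of `1`s: each position of the block contributes a factor `2`. -/
lemma pairCount_occ (m i t : ℕ) : pairCount (i + t + 1) (Occ m i t) = 2 ^ t * A m i := by
  induction t with
  | zero =>
    have h := pairCount_succ (fun a b => a = 1 ∧ b = 1) (dependsBelow_avoids m i)
    rw [pairCount_one_both, mul_one] at h
    rw [pow_zero, one_mul]
    refine Eq.trans (pairCount_congr fun x y => ?_) h
    unfold Occ
    refine and_congr_right fun _ => and_congr_right fun _ => and_iff_left ?_
    intro k h1 h2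
    omega
  | succ t ih =>
    have h := pairCount_succ (fun a b => a + b = 1) (dependsBelow_occ m i t)
    rw [pairCount_one_sum, ih] at h
    rw [pow_succ, mul_right_comm]
    refine Eq.trans (pairCount_congr fun x y => ?_) h
    unfold Occ
    constructor
    · rintro ⟨h1, h2, h3, h4⟩
      exact ⟨⟨h1, h2, h3, fun k hk hk' => h4 k hk (by omega)⟩, h4 _ (by omega) (by omega)⟩
    · rintro ⟨⟨h1, h2, h3, h4⟩, h5⟩
      refine ⟨h1, h2, h3, fun k hk hk' => ?_⟩
      rcases Nat.lt_or_ge k (i + t + 1) with hlt | hge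
      · exact h4 k hk (by omega)
      · obtain rfl : k = i + t + 1 := by omega
        exact h5

/-- Each of the `d` unconstrained positions above the relevant ones contributes a factor `4`. -/
lemma pairCount_add {n : ℕ} {P : ℕ → ℕ → Prop} (hP : DependsBelow n P) (d : ℕ) :
    pairCount (n + d) P = 4 ^ d * pairCount n P := by
  induction d with
  | zero => simp
  | succ d ih =>
    have h := pairCount_succ (fun _ _ => True) (hP.mono (Nat.le_add_right n d))
    rw [pairCount_one_true, ih] at h
    simp only [and_true] at h
    rw [← add_assoc, pow_succ, mul_right_comm]
    exact h

open Classical in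
/-- for `m ≥ 1`, `j ≥ m + 1` and `0 ≤ i ≤ j - 1 - m`, the number of
pairs of length-`j` binary strings whose rightmost `i` positions (positions
`0, …, i-1`) avoid `P(m)`, whose position `i` has digit sum `2`, and whose
positions `i+1, …, i+m` each have digit sum `1`, equals
`2^m · 4^(j-1-m-i) · A_m(i)`. -/
theorem card_rightmost_occurrence (m j i : ℕ) (hm : 1 ≤ m) (hj : m + 1 ≤ j)
    (hi : i + m + 1 ≤ j) :
    ((Finset.range (2 ^ j) ×ˢ Finset.range (2 ^ j)).filter fun p =>
        avoids m i p.1 p.2 ∧ bitd p.1 i = 1 ∧ bitd p.2 i = 1 ∧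
          ∀ k, i < k → k ≤ i + m → bitd p.1 k + bitd p.2 k = 1).card
      = 2 ^ m * 4 ^ (j - (i + m + 1)) * A m i := by
  obtain ⟨d, rfl⟩ := Nat.exists_eq_add_of_le hi
  have h := pairCount_add (dependsBelow_occ m i m) d
  rw [pairCount_occ] at h
  rw [Nat.add_sub_cancel_left, mul_comm (2 ^ m), mul_assoc, ← h]
  unfold pairCount Occ
  congr
end

section
/- For all N-bit binary numbers x and y, all m ≥ 0, and every position 0 ≤ i ≤ N−1, the i-th bit of the m-truncated sum x +_m y, viewed as an element of the field F_2, equals (x_i + y_i) + Σ_{k=1}^{min(i,m)} (x_{i−k} y_{i−k}) ∏_{j=i−k+1}^{i−1} (x_j + y_j), where all additions and multiplications are performed in F_2 (the 2-element field) and the digits x_j, y_j ∈ {0,1} are regarded as elements of F_2. -/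
theorem sum_bits_lt (f : ℕ → ℕ) (hf : ∀ i, f i < 2) (N : ℕ) :
    ∑ i ∈ Finset.range N, f i * 2 ^ i < 2 ^ N := by
  induction N with
  | zero => simp
  | succ N ih =>
    rw [Finset.sum_range_succ, pow_succ]
    have h1 : f N * 2 ^ N ≤ 1 * 2 ^ N := Nat.mul_le_mul_right _ (by have := hf N; omega)
    omega

/-- A sum of binary digits weighted by powers of two has exactly those digits. -/
theorem bitd_sum (f : ℕ → ℕ) (hf : ∀ i, f i < 2) (N i : ℕ) (hi : i < N) :
    bitd (∑ i ∈ Finset.range N, f i * 2 ^ i) i = f i := by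
  induction N with
  | zero => omega
  | succ N ih =>
    rw [Finset.sum_range_succ]
    rcases Nat.lt_succ_iff_lt_or_eq.mp hi with h | rfl
    · rw [← ih h]
      obtain ⟨d, rfl⟩ : ∃ d, N = i + 1 + d := ⟨N - (i + 1), by omega⟩
      have e : f (i + 1 + d) * 2 ^ (i + 1 + d) = 2 ^ i * (2 * (f (i + 1 + d) * 2 ^ d)) := by
        ring
      unfold bitd
      rw [e, Nat.add_mul_div_left _ _ (by positivity), Nat.add_mul_mod_self_left]
    · unfold bitd
      rw [Nat.add_mul_div_right _ _ (by positivity), Nat.div_eq_of_lt (sum_bits_lt f hf i),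
        zero_add, Nat.mod_eq_of_lt (hf i)]

theorem bitd_eq_zero_or_one (x i : ℕ) : bitd x i = 0 ∨ bitd x i = 1 := by
  unfold bitd
  omega

/-- Position `j` generates a carry that is propagated by all positions strictly between `j`
and `i`. -/
def CarryFrom (x y i j : ℕ) : Prop :=
  bitd x j = 1 ∧ bitd y j = 1 ∧ ∀ k, j < k → k < i → bitd x k + bitd y k = 1

theorem CarryFrom.unique {x y i j j' : ℕ} (h : CarryFrom x y i j) (h' : CarryFrom x y i j')
    (hj : j < i) (hj' : j' < i) : j = j' := by
  obtain ⟨a, b, c⟩ := h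
  obtain ⟨a', b', c'⟩ := h'
  rcases lt_trichotomy j j' with l | l | l
  · have := c j' l hj'
    omega
  · exact l
  · have := c' j l hj
    omega

open Classical in
/-- The monomial attached to position `j` is the `F_2`-valued indicator of `CarryFrom`. -/
theorem term_eq (x y i j : ℕ) :
    ((bitd x j : ZMod 2) * (bitd y j : ZMod 2)) *
        ∏ l ∈ Finset.Icc (j + 1) (i - 1), ((bitd x l : ZMod 2) + (bitd y l : ZMod 2)) =
      if CarryFrom x y i j then 1 else 0 := by
  split_ifs with h
  · obtain ⟨a, b, c⟩ := h
    rw [a, b, Finset.prod_eq_one]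
    · simp
    · intro l hl
      rw [Finset.mem_Icc] at hl
      rw [← Nat.cast_add, c l (by omega) (by omega), Nat.cast_one]
  · rcases bitd_eq_zero_or_one x j with a | a
    · simp [a]
    rcases bitd_eq_zero_or_one y j with b | b
    · simp [b]
    obtain ⟨l, h1, h2, h3⟩ : ∃ l, j < l ∧ l < i ∧ bitd x l + bitd y l ≠ 1 := by
      by_contra hc
      push Not at hc
      exact h ⟨a, b, hc⟩
    -- a sum of two digits other than 1 is 0 or 2, so it vanishes in `F_2`
    have h0 : (bitd x l : ZMod 2) + (bitd y l : ZMod 2) = 0 := by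
      rcases bitd_eq_zero_or_one x l with p | p <;> rcases bitd_eq_zero_or_one y l with q | q <;>
        rw [p, q] at h3 ⊢ <;> first | omega | decide
    exact mul_eq_zero_of_right _
      (Finset.prod_eq_zero (Finset.mem_Icc.mpr ⟨h1, Nat.le_sub_one_of_lt h2⟩) h0)

theorem tcarry_cast (m x y i : ℕ) :
    (tcarry m x y i : ZMod 2) =
      ∑ k ∈ Finset.Icc 1 (min i m),
        ((bitd x (i - k) : ZMod 2) * (bitd y (i - k) : ZMod 2)) *
          ∏ j ∈ Finset.Icc (i - k + 1) (i - 1),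
            ((bitd x j : ZMod 2) + (bitd y j : ZMod 2)) := by
  classical
  simp only [term_eq]
  unfold tcarry
  split_ifs with h
  · obtain ⟨j, h1, h2, h3⟩ := h
    have hj : CarryFrom x y i j := h3
    have e : i - (i - j) = j := by omega
    rw [Finset.sum_eq_single (i - j), e, if_pos hj, Nat.cast_one]
    · intro k hk hne
      rw [Finset.mem_Icc] at hk
      refine if_neg fun hc => hne ?_
      have := hc.unique hj (by omega) h2
      omega
    · intro hn
      exact absurd (Finset.mem_Icc.mpr ⟨by omega, by omega⟩) hn
  · rw [Finset.sum_eq_zero, Nat.cast_zero]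
    intro k hk
    rw [Finset.mem_Icc] at hk
    exact if_neg fun hc => h ⟨i - k, by omega, by omega, hc⟩

/-- the polynomial formula over `F_2 = ZMod 2` for bit `i` of the
`m`-truncated sum: it equals
`(x_i + y_i) + ∑_{k=1}^{min(i,m)} (x_{i-k} y_{i-k}) ∏_{j=i-k+1}^{i-1} (x_j + y_j)`. -/
theorem bit_tadd_formula (N m x y i : ℕ) (hx : x < 2 ^ N) (hy : y < 2 ^ N) (hi : i < N) :
    (bitd (tadd N m x y) i : ZMod 2) =
      ((bitd x i : ZMod 2) + (bitd y i : ZMod 2)) +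
        ∑ k ∈ Finset.Icc 1 (min i m),
          ((bitd x (i - k) : ZMod 2) * (bitd y (i - k) : ZMod 2)) *
            ∏ j ∈ Finset.Icc (i - k + 1) (i - 1),
              ((bitd x j : ZMod 2) + (bitd y j : ZMod 2)) := by
  unfold tadd
  rw [bitd_sum (fun i => (bitd x i + bitd y i + tcarry m x y i) % 2)
    (fun i => Nat.mod_lt _ (by norm_num)) N i hi, ZMod.natCast_mod, Nat.cast_add, Nat.cast_add,
    tcarry_cast]
end

section
/- Fix integers m ≥ 1 and i ≥ 1. In the multivariate polynomial ring over F_2 with variables X_0, …, X_{N−1}, Y_0, …, Y_{N−1} (N > i), the polynomial encoding the i-th bit of m-truncated addition, namely P_i := (X_i + Y_i) + Σ_{k=1}^{min(i,m)} (X_{i−k} Y_{i−k}) ∏_{j=i−k+1}^{i−1} (X_j + Y_j), has total degree exactly min(i, m) + 1. -/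
/-!
The `k`-th summand (the carry produced at position `i - k` and propagated up to `i`) is a product
of `k + 1` nonzero linear forms, hence homogeneous of degree `k + 1`, and nonzero because
`MvPolynomial` over a field is a domain. So the summand with `k = min i m` has strictly larger
degree than all the others and than the linear form `X_i + Y_i`, and nothing can cancel it.
-/

open MvPolynomial in
/-- The polynomial over `F_2 = ZMod 2` encoding bit `i` of `m`-truncated addition;
the variables `X_0, X_1, …` are indexed by `Sum.inl` and the variables
`Y_0, Y_1, …` by `Sum.inr`. -/
noncomputable def truncAddPoly (m i : ℕ) : MvPolynomial (ℕ ⊕ ℕ) (ZMod 2) :=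
  (X (Sum.inl i) + X (Sum.inr i)) +
    ∑ k ∈ Finset.Icc 1 (min i m),
      X (Sum.inl (i - k)) * X (Sum.inr (i - k)) *
        ∏ j ∈ Finset.Icc (i - k + 1) (i - 1), (X (Sum.inl j) + X (Sum.inr j))

namespace TruncAdd

open MvPolynomial

/-- The `k`-th summand `X_{i-k} Y_{i-k} ∏_{j=i-k+1}^{i-1} (X_j + Y_j)` of `truncAddPoly`. -/
noncomputable def carryTerm (i k : ℕ) : MvPolynomial (ℕ ⊕ ℕ) (ZMod 2) :=
  X (Sum.inl (i - k)) * X (Sum.inr (i - k)) *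
    ∏ j ∈ Finset.Icc (i - k + 1) (i - 1), (X (Sum.inl j) + X (Sum.inr j))

lemma isHomogeneous_linear (j : ℕ) :
    (X (Sum.inl j) + X (Sum.inr j) : MvPolynomial (ℕ ⊕ ℕ) (ZMod 2)).IsHomogeneous 1 :=
  (isHomogeneous_X _ _).add (isHomogeneous_X _ _)

lemma linear_ne_zero (j : ℕ) :
    (X (Sum.inl j) + X (Sum.inr j) : MvPolynomial (ℕ ⊕ ℕ) (ZMod 2)) ≠ 0 := by
  intro h
  -- The form takes the value `1` at the point with all `x`-bits `1` and all `y`-bits `0`.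
  have h' := congrArg (eval (Sum.elim (fun _ => (1 : ZMod 2)) (fun _ => 0))) h
  simp at h'

lemma carryTerm_ne_zero (i k : ℕ) : carryTerm i k ≠ 0 :=
  mul_ne_zero (mul_ne_zero (X_ne_zero _) (X_ne_zero _))
    (Finset.prod_ne_zero_iff.mpr fun j _ => linear_ne_zero j)

lemma totalDegree_carryTerm {i k : ℕ} (hk : 1 ≤ k) (hki : k ≤ i) :
    (carryTerm i k).totalDegree = k + 1 := by
  have h : (carryTerm i k).IsHomogeneous
      (1 + 1 + ∑ _j ∈ Finset.Icc (i - k + 1) (i - 1), 1) :=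
    ((isHomogeneous_X _ _).mul (isHomogeneous_X _ _)).mul
      (IsHomogeneous.prod _ _ _ fun j _ => isHomogeneous_linear j)
  rw [h.totalDegree (carryTerm_ne_zero i k), Finset.sum_const, Nat.card_Icc, smul_eq_mul]
  omega

end TruncAdd

/-- for `m ≥ 1` and `1 ≤ i < N`, the polynomial encoding bit `i` of
`m`-truncated addition has total degree exactly `min(i, m) + 1`. -/
theorem truncAddPoly_totalDegree (N m i : ℕ) (hm : 1 ≤ m) (hi : 1 ≤ i) (hiN : i < N) :
    (truncAddPoly m i).totalDegree = min i m + 1 := by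
  open MvPolynomial TruncAdd in
  obtain ⟨M, hM⟩ : ∃ M, min i m = M + 1 := ⟨min i m - 1, by omega⟩
  have hP : truncAddPoly m i = ((X (Sum.inl i) + X (Sum.inr i)) +
      ∑ k ∈ Finset.Icc 1 M, carryTerm i k) + carryTerm i (M + 1) := by
    rw [add_assoc, ← Finset.sum_Icc_succ_top (by omega), ← hM]
    rfl
  have htop : (carryTerm i (M + 1)).totalDegree = M + 1 + 1 :=
    totalDegree_carryTerm (by omega) (by omega)
  have hlow : ((X (Sum.inl i) + X (Sum.inr i)) +
      ∑ k ∈ Finset.Icc 1 M, carryTerm i k).totalDegree ≤ M + 1 := by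
    refine (totalDegree_add _ _).trans (max_le ?_ ?_)
    · exact (isHomogeneous_linear i).totalDegree_le.trans (by omega)
    · refine totalDegree_finsetSum_le fun k hk => ?_
      rw [Finset.mem_Icc] at hk
      rw [totalDegree_carryTerm hk.1 (by omega)]
      omega
  rw [hP, totalDegree_add_eq_right_of_totalDegree_lt (by omega), htop, hM]
end
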